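/- Let X = A_3 be embedded in Y = D_{10} = SO_{20} via the 20-dimensional irreducible representation of highest weight δ = 2ω_2 = (0,2,0), and let λ be one of the half-spin weights λ_9, λ_{10} of Y, so that V_Y(λ) has dimension 2^9 = 512. Then V_Y(λ)↓X = V_X(3ω_1+ω_2+ω_3) ⊕ V_X(ω_1+ω_2+3ω_3), i.e. the restriction is the direct sum of the two (mutually dual) irreducible X-modules of highest weights (3,1,1) and (1,1,3); in particular V_Y(λ)↓X is multiplicity-free. -/

import Mathlib

/-!
# Common framework

Over an algebraically closed field of characteristic zero, finite–dimensional rational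
representations of a simple algebraic group are semisimple and are determined by their
formal characters, i.e. by elements of the group ring of the (rational) weight lattice;
the character of the irreducible module of highest weight `λ` is pinned down by the
Weyl character formula `A_ρ · χ_λ = A_{λ+ρ}`.

Below we model, completely combinatorially:

* type `A_r` : weights are realised by their traceless representatives in `Fin (r+1) → ℚ`
  (the `gl`-coordinates), and the Weyl group is the symmetric group;
* types `B_n, C_n, D_n` : weights are realised in the standard `ε`-coordinates
  `Fin n → ℚ`, and the Weyl group consists of (signed) permutations, with evenly many
  sign changes in type `D`;
* an embedding `X = A_r < Y` (classical of type `t` and rank `n`) in which `X` acts on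
  the natural module `W` of `Y` irreducibly with highest weight `δ` : the weights of `W`
  are `± w i` (plus one zero weight in type `B`), and restriction of characters is induced
  by the map `v ↦ ∑ i, v i • w i` of weight lattices;
* `IsMFRes t n r δ lam` : the restriction to `X` of the irreducible `Y`-module with
  highest weight `lam` is multiplicity-free, i.e. its character is a sum of distinct
  irreducible characters of `X`.

Dominant weights are always recorded by their (natural number) coordinates in the basis
of fundamental weights, `e n k` being the `k`-th fundamental weight (1-indexed).
-/

noncomputable section

namespace MFPaper

/-- The Dynkin type of a classical group `B_n = SO_{2n+1}`, `C_n = Sp_{2n}`, `D_n = SO_{2n}`. -/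
inductive CType | B | C | D
deriving DecidableEq

/-- The character ring: the integral group ring of a rational weight space
with `k` coordinates. -/
abbrev CharRing (k : ℕ) : Type := AddMonoidAlgebra ℤ (Fin k → ℚ)

/-- The formal exponential `e^v` of a weight `v`. -/
def mono {k : ℕ} (v : Fin k → ℚ) : CharRing k := AddMonoidAlgebra.single v 1

/-- `e n k` : the `k`-th fundamental dominant weight (`1 ≤ k ≤ n`, 1-indexed) of a rank `n`
group, recorded by its coordinates in the basis of fundamental weights. -/
def e (n k : ℕ) : Fin n → ℕ := fun i => if (i : ℕ) + 1 = k then 1 else 0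

/-! ### Type `A_r` -/

/-- The partition (`gl`) lift of the dominant weight of `A_r` with coordinates `d`
in the basis of fundamental weights. -/
def partLift (r : ℕ) (d : Fin r → ℕ) : Fin (r + 1) → ℚ := fun i =>
  ∑ j ∈ Finset.univ.filter (fun j : Fin r => (i : ℕ) ≤ (j : ℕ)), (d j : ℚ)

/-- The traceless (`sl`) representative of the dominant weight of `A_r` with coordinates `d`. -/
def slWt (r : ℕ) (d : Fin r → ℕ) : Fin (r + 1) → ℚ := fun i =>
  partLift r d i - (∑ j : Fin r, (((j : ℕ) : ℚ) + 1) * (d j : ℚ)) / (r + 1)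

/-- A lift of the half-sum of the positive roots of `A_r`. -/
def rhoA (r : ℕ) : Fin (r + 1) → ℚ := fun i => (r : ℚ) - (i : ℕ)

/-- The Weyl alternating sum `A_v = ∑_{σ} sgn(σ) e^{σ v}` for type `A_r`. -/
def altA (r : ℕ) (v : Fin (r + 1) → ℚ) : CharRing (r + 1) :=
  ∑ σ : Equiv.Perm (Fin (r + 1)),
    ((Equiv.Perm.sign σ : ℤˣ) : ℤ) • mono (fun i => v (σ i))

/-- `IsCharA r d f` : `f` is the formal character of the irreducible `A_r`-module
of highest weight `d` (Weyl character formula). -/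
def IsCharA (r : ℕ) (d : Fin r → ℕ) (f : CharRing (r + 1)) : Prop :=
  altA r (rhoA r) * f = altA r (slWt r d + rhoA r)

/-- `Decomp r F c` : the character `F` of a representation of `A_r` decomposes as
`∑_μ (c μ) · χ_μ`, i.e. the irreducible of highest weight `μ` occurs in it as a
composition factor with multiplicity `c μ`. -/
def Decomp (r : ℕ) (F : CharRing (r + 1)) (c : (Fin r → ℕ) →₀ ℕ) : Prop :=
  F * altA r (rhoA r) = c.sum fun μ k => (k : ℤ) • altA r (slWt r μ + rhoA r)

/-- The Weyl dimension formula for type `A_r`. -/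
def dimA (r : ℕ) (d : Fin r → ℕ) : ℚ :=
  ∏ p ∈ Finset.univ.filter (fun p : Fin (r + 1) × Fin (r + 1) => (p.1 : ℕ) < (p.2 : ℕ)),
    ((partLift r d p.1 - partLift r d p.2 + ((p.2 : ℕ) : ℚ) - ((p.1 : ℕ) : ℚ)) /
      (((p.2 : ℕ) : ℚ) - ((p.1 : ℕ) : ℚ)))

/-- The self-dual irreducible `A_r`-module of highest weight `d` is *symplectic*
(it carries an invariant alternating form); by Steinberg's criterion this happens
exactly when `⟨d, 2ρ^∨⟩ = ∑ d_k · k(r+1-k)` is odd. -/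
def IsSympWt (r : ℕ) (d : Fin r → ℕ) : Prop :=
  Odd (∑ i : Fin r, d i * ((i : ℕ) + 1) * (r - (i : ℕ)))

/-! ### The classical types `B`, `C`, `D` -/

/-- Convenient access to the `k`-th (0-indexed) coordinate. -/
def cval {n : ℕ} (c : Fin n → ℕ) (k : ℕ) : ℚ := if h : k < n then (c ⟨k, h⟩ : ℚ) else 0

/-- `ε`-coordinates of the dominant weight of the classical group of type `t` and rank `n`
with coordinates `c` in the basis of fundamental weights (Bourbaki numbering). -/
def epsWt (t : CType) (n : ℕ) (c : Fin n → ℕ) : Fin n → ℚ := fun i =>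
  (∑ k ∈ Finset.univ.filter (fun k : Fin n => (i : ℕ) ≤ (k : ℕ)), (c k : ℚ)) -
    (match t with
      | .C => 0
      | .B => cval c (n - 1) / 2
      | .D => (cval c (n - 2) + cval c (n - 1)) / 2)

/-- The half-sum of the positive roots in `ε`-coordinates. -/
def rhoY (t : CType) (n : ℕ) : Fin n → ℚ := fun i =>
  match t with
  | .C => (n : ℚ) - (i : ℕ)
  | .B => (n : ℚ) - (i : ℕ) - 1 / 2
  | .D => (n : ℚ) - 1 - (i : ℕ)

/-- The Weyl alternating sum for the classical group of type `t` and rank `n`: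
the Weyl group consists of the signed permutations of the coordinates,
with evenly many sign changes in type `D`. -/
def altY (t : CType) (n : ℕ) (v : Fin n → ℚ) : CharRing n :=
  ∑ σ : Equiv.Perm (Fin n), ∑ s : Fin n → Bool,
    if t = CType.D ∧ ¬ Even (Finset.univ.filter (fun i => s i = true)).card then 0
    else (((Equiv.Perm.sign σ : ℤˣ) : ℤ) *
          (-1) ^ (Finset.univ.filter (fun i => s i = true)).card) •
      mono (fun i => (if s i then -1 else 1) * v (σ i))

/-- `IsCharY t n c f` : `f` is the formal character of the irreducible module of highest
weight `c` for the classical group of type `t` and rank `n` (Weyl character formula). -/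
def IsCharY (t : CType) (n : ℕ) (c : Fin n → ℕ) (f : CharRing n) : Prop :=
  altY t n (rhoY t n) * f = altY t n (epsWt t n c + rhoY t n)

/-! ### The embedding `X = A_r < Y` via `δ`, and restriction of characters -/

/-- `WtSys t n r δ w` : `w` lists "half" of the weights of the natural module
`W = V_X(δ)` of the classical group `Y` of type `t` and rank `n`, for `X = A_r`:
the weights of `W` (with multiplicity) are exactly the `± w i`, together with one
extra zero weight in type `B`.  Such a `w` records a maximal torus embedding
`T_X → T_Y` realising the irreducible embedding `X < Y = SO(W)` or `Sp(W)` given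
by the representation of highest weight `δ`. -/
def WtSys (t : CType) (n r : ℕ) (δ : Fin r → ℕ)
    (w : Fin n → (Fin (r + 1) → ℚ)) : Prop :=
  ((∑ i : Fin n, (mono (w i) + mono (-(w i)))) +
      (if t = CType.B then mono (0 : Fin (r + 1) → ℚ) else 0)) * altA r (rhoA r)
    = altA r (slWt r δ + rhoA r)

/-- Restriction of characters from `Y` to `X = A_r` along the torus embedding
recorded by `w`. -/
def resChar {n r : ℕ} (w : Fin n → (Fin (r + 1) → ℚ)) (F : CharRing n) :
    CharRing (r + 1) :=
  AddMonoidAlgebra.mapDomain (fun v : Fin n → ℚ => ∑ i : Fin n, v i • w i) F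

/-- `IsMFRes t n r δ lam` : in the embedding `X = A_r < Y` (the classical group of type
`t` and rank `n`) given by the irreducible representation of highest weight `δ`, the
restriction to `X` of the irreducible `Y`-module of highest weight `lam` is
multiplicity-free: its character is a sum of *distinct* irreducible characters of `X`. -/
def IsMFRes (t : CType) (n r : ℕ) (δ : Fin r → ℕ) (lam : Fin n → ℕ) : Prop :=
  ∀ w, WtSys t n r δ w → ∀ f, IsCharY t n lam f →
    ∃ c : (Fin r → ℕ) →₀ ℕ, Decomp r (resChar w f) c ∧ ∀ μ, c μ ≤ 1

/-- The operation `e^v ↦ e^{k·v}` on characters (Adams operation on the torus),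
used to express symmetric and exterior powers of characters. -/
def pw {m : ℕ} (k : ℕ) (F : CharRing m) : CharRing m :=
  AddMonoidAlgebra.mapDomain (fun v : Fin m → ℚ => (k : ℚ) • v) F

/-- The irreducible `A_r`-module of highest weight `d` carries a nonzero invariant
*symmetric* bilinear form, i.e. the trivial module occurs in its symmetric square
(whose character `S` satisfies `2S = f² + f^{[2]}`). -/
def HasSymForm (r : ℕ) (d : Fin r → ℕ) : Prop :=
  ∀ f, IsCharA r d f →
    ∃ c : (Fin r → ℕ) →₀ ℕ,
      (f * f + pw 2 f) * altA r (rhoA r)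
          = c.sum (fun μ k => ((2 * k : ℕ) : ℤ) • altA r (slWt r μ + rhoA r)) ∧ 1 ≤ c 0

/-- The irreducible `A_r`-module of highest weight `d` carries a nonzero invariant
*alternating* bilinear form, i.e. the trivial module occurs in its exterior square
(whose character `Λ` satisfies `2Λ = f² - f^{[2]}`). -/
def HasAltForm (r : ℕ) (d : Fin r → ℕ) : Prop :=
  ∀ f, IsCharA r d f →
    ∃ c : (Fin r → ℕ) →₀ ℕ,
      (f * f - pw 2 f) * altA r (rhoA r)
          = c.sum (fun μ k => ((2 * k : ℕ) : ℤ) • altA r (slWt r μ + rhoA r)) ∧ 1 ≤ c 0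

end MFPaper

open MFPaper

/-!
The weights of `W = V(2ω₂)` are the roots, three pairs `±θ` with `θ` a permutation of
`(1, 1, -1, -1)`, and zero twice. The spin character restricts to the product of the factors
`e^{v/2} + e^{-v/2}` over the pairs `±v` of weights, and since zero is a weight, both half-spin
characters restrict to half of it. The six pairs of roots contribute the character of `V(ρ)`, by the
Weyl denominator formula for `ρ` and `2ρ`. The three pairs `±θ` contribute `∑ e^{2εᵢ} + ∑ e^{-2εᵢ}`
up to a shift to trace zero. Multiplying the restriction by the Weyl denominator therefore turns it
into the alternant of `2ρ` times two power sums. Consecutive coordinates of `2ρ` differ by `2`, so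
in each of the two products every alternant but one has a repeated coordinate and vanishes. The two
survivors are the alternants of `(3, 1, 1)` and `(1, 1, 3)`.

The same cancellation in type `D`, with `±vᵢ` in place of `vᵢ`, identifies the half-spin characters.
-/

namespace MFPaper

section CharRing

variable {k m n r : ℕ}

theorem mono_zero : mono (0 : Fin k → ℚ) = 1 := rfl

theorem mono_add (u v : Fin k → ℚ) : mono (u + v) = mono u * mono v := by
  simp [mono, AddMonoidAlgebra.single_mul_single]

theorem mono_sum {ι : Type*} (s : Finset ι) (u : ι → Fin k → ℚ) :
    mono (∑ i ∈ s, u i) = ∏ i ∈ s, mono (u i) := by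
  classical
  induction s using Finset.induction_on with
  | empty => rw [Finset.sum_empty, Finset.prod_empty, mono_zero]
  | insert i s hi ih => rw [Finset.sum_insert hi, Finset.prod_insert hi, mono_add, ih]

theorem mono_nsmul (a : ℕ) (v : Fin k → ℚ) : mono (a • v) = mono v ^ a := by
  simp [mono, AddMonoidAlgebra.single_pow]

theorem coeff_smul_mono (z : ℤ) (u v : Fin k → ℚ) :
    (z • mono u).coeff v = if u = v then z else 0 := by
  simp [mono, Finsupp.single_apply]

theorem coeff_mono (u v : Fin k → ℚ) : (mono u).coeff v = if u = v then 1 else 0 := by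
  simpa using coeff_smul_mono 1 u v

/-- The dimension homomorphism, sending a character to the dimension of its representation. -/
def charDim (k : ℕ) : CharRing k →ₐ[ℤ] ℤ :=
  AddMonoidAlgebra.lift ℤ ℤ (Fin k → ℚ) 1

theorem charDim_mono (v : Fin k → ℚ) : charDim k (mono v) = 1 := by
  simp [charDim, mono]

theorem two_ne_zero_charRing : (2 : CharRing k) ≠ 0 := by
  intro h
  have hdim := congrArg (charDim k) h
  rw [map_ofNat, map_zero] at hdim
  exact two_ne_zero hdim

theorem eq_zero_of_eq_neg {F : CharRing k} (h : F = -F) : F = 0 := by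
  refine (mul_eq_zero.1 ?_).resolve_left (two_ne_zero_charRing (k := k))
  linear_combination h

/-- If the exponent `u a` occurs only once, it cannot cancel. -/
theorem sum_smul_mono_ne_zero {ι : Type*} {s : Finset ι} {c : ι → ℤ} {u : ι → Fin k → ℚ} {a : ι}
    (ha : a ∈ s) (hc : c a ≠ 0) (hu : ∀ b ∈ s, u b = u a → b = a) :
    ∑ b ∈ s, c b • mono (u b) ≠ 0 := by
  intro h
  have hcoeff := congrArg (fun F : CharRing k ↦ F.coeff (u a)) h
  simp only [AddMonoidAlgebra.coeff_sum, Finsupp.finsetSum_apply, coeff_smul_mono] at hcoeff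
  rw [Finset.sum_eq_single_of_mem a ha fun b hb hba ↦ if_neg fun h ↦ hba (hu b hb h),
    if_pos rfl] at hcoeff
  exact hc hcoeff

theorem coeff_sum_map_mono (M : Multiset (Fin k → ℚ)) (v : Fin k → ℚ) :
    (M.map mono).sum.coeff v = M.count v := by
  induction M using Multiset.induction_on with
  | empty => simp
  | cons u M ih =>
    rw [Multiset.map_cons, Multiset.sum_cons, Multiset.count_cons, AddMonoidAlgebra.coeff_add,
      Finsupp.add_apply, ih, coeff_mono, add_comm]
    simp [eq_comm]

theorem sum_map_mono_injective :
    Function.Injective fun M : Multiset (Fin k → ℚ) ↦ (M.map mono).sum := by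
  intro M N h
  ext v
  have hv := congrArg (fun F : CharRing k ↦ F.coeff v) h
  simpa only [coeff_sum_map_mono, Nat.cast_inj] using hv

/-- The ring homomorphism `e^v ↦ e^{L v}` of character rings induced by a linear map `L` of weight
spaces.  Permutations and sign changes of coordinates as well as restriction of characters are of
this form. -/
def charMap (L : (Fin m → ℚ) →ₗ[ℚ] (Fin n → ℚ)) : CharRing m →+* CharRing n :=
  AddMonoidAlgebra.mapDomainRingHom ℤ L.toAddMonoidHom

theorem charMap_mono (L : (Fin m → ℚ) →ₗ[ℚ] (Fin n → ℚ)) (v : Fin m → ℚ) :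
    charMap L (mono v) = mono (L v) :=
  AddMonoidAlgebra.mapDomain_single

theorem resChar_eq_charMap (w : Fin n → Fin (r + 1) → ℚ) (F : CharRing n) :
    resChar w F = charMap (Fintype.linearCombination ℚ w) F :=
  rfl

end CharRing

section Antisymmetrizer

variable {k r : ℕ}

/-- The action `e^v ↦ e^{v ∘ σ}` of a permutation of the coordinates on characters. -/
abbrev permChar (σ : Equiv.Perm (Fin k)) : CharRing k →+* CharRing k :=
  charMap (LinearMap.funLeft ℚ ℚ σ)

theorem permChar_mono (σ : Equiv.Perm (Fin k)) (v : Fin k → ℚ) :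
    permChar σ (mono v) = mono (v ∘ σ) :=
  charMap_mono _ _

/-- The antisymmetrizer `F ↦ ∑_σ sgn(σ) σF` over the permutations of the coordinates. -/
def antisymm (k : ℕ) : CharRing k →+ CharRing k :=
  ∑ σ : Equiv.Perm (Fin k), ((Equiv.Perm.sign σ : ℤˣ) : ℤ) • (permChar σ).toAddMonoidHom

theorem antisymm_apply (F : CharRing k) :
    antisymm k F = ∑ σ : Equiv.Perm (Fin k), ((Equiv.Perm.sign σ : ℤˣ) : ℤ) • permChar σ F := by
  simp [antisymm]

theorem antisymm_mono (v : Fin k → ℚ) :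
    antisymm k (mono v) =
      ∑ σ : Equiv.Perm (Fin k), ((Equiv.Perm.sign σ : ℤˣ) : ℤ) • mono (v ∘ σ) := by
  simp only [antisymm_apply, permChar_mono]

theorem altA_eq_antisymm (v : Fin (r + 1) → ℚ) : altA r v = antisymm (r + 1) (mono v) :=
  (antisymm_mono v).symm

/-- A character is permutation invariant if it is fixed by all permutations of the coordinates,
i.e. by the Weyl group of type `A`. -/
def PermInvariant (F : CharRing k) : Prop :=
  ∀ σ : Equiv.Perm (Fin k), permChar σ F = F

theorem antisymm_mul {F : CharRing k} (hF : PermInvariant F) (G : CharRing k) :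
    antisymm k (F * G) = F * antisymm k G := by
  simp only [antisymm_apply, Finset.mul_sum, map_mul, hF _, mul_smul_comm]

theorem antisymm_mono_comp (v : Fin k → ℚ) (σ : Equiv.Perm (Fin k)) :
    antisymm k (mono (v ∘ σ)) = ((Equiv.Perm.sign σ : ℤˣ) : ℤ) • antisymm k (mono v) := by
  simp only [antisymm_mono, Finset.smul_sum, smul_smul]
  refine Fintype.sum_equiv (Equiv.mulLeft σ) _ _ fun τ ↦ ?_
  have hsign : Equiv.Perm.sign σ * Equiv.Perm.sign (σ * τ) = Equiv.Perm.sign τ := by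
    rw [Equiv.Perm.sign_mul, ← mul_assoc, Int.units_mul_self, one_mul]
  rw [Equiv.coe_mulLeft, ← Units.val_mul, hsign, Equiv.Perm.coe_mul, Function.comp_assoc]

end Antisymmetrizer

section TypeA

variable {k r : ℕ}

theorem altA_comp_perm (v : Fin (r + 1) → ℚ) (σ : Equiv.Perm (Fin (r + 1))) :
    altA r (v ∘ σ) = ((Equiv.Perm.sign σ : ℤˣ) : ℤ) • altA r v := by
  rw [altA_eq_antisymm, altA_eq_antisymm, antisymm_mono_comp]

theorem altA_eq_zero {v : Fin (r + 1) → ℚ} {i j : Fin (r + 1)} (hij : i ≠ j) (hv : v i = v j) :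
    altA r v = 0 := by
  have hswap : v ∘ Equiv.swap i j = v := by
    ext l
    by_cases hi : l = i
    · simp [hi, hv]
    by_cases hj : l = j
    · simp [hj, hv]
    · simp [Equiv.swap_apply_of_ne_of_ne hi hj]
  refine eq_zero_of_eq_neg ?_
  conv_lhs => rw [← hswap, altA_comp_perm, Equiv.Perm.sign_swap hij, Units.val_neg, Units.val_one,
    neg_one_zsmul]

theorem altA_ne_zero {v : Fin (r + 1) → ℚ} (hv : Function.Injective v) : altA r v ≠ 0 := by
  refine sum_smul_mono_ne_zero (Finset.mem_univ 1) (by simp) fun σ _ hσ ↦ ?_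
  ext i
  exact congrArg _ (hv (congrFun hσ i))

theorem rhoA_injective (r : ℕ) : Function.Injective (rhoA r) := by
  intro i j h
  simpa [rhoA, Fin.val_inj] using h

theorem rhoA_castSucc (i : Fin r) : rhoA r i.castSucc = rhoA r i.succ + 1 := by
  simp only [rhoA, Fin.val_castSucc, Fin.val_succ]
  push_cast
  ring

theorem permInvariant_mono_const (c : ℚ) : PermInvariant (mono fun _ : Fin k ↦ c) :=
  fun σ ↦ permChar_mono σ _

theorem sum_mono_mul_altA {ι : Type*} {s : Finset ι} {u : ι → Fin (r + 1) → ℚ}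
    (hu : PermInvariant (∑ b ∈ s, mono (u b))) (v : Fin (r + 1) → ℚ) :
    (∑ b ∈ s, mono (u b)) * altA r v = ∑ b ∈ s, altA r (u b + v) := by
  rw [altA_eq_antisymm, ← antisymm_mul hu, Finset.sum_mul, map_sum]
  simp only [altA_eq_antisymm, mono_add]

theorem altA_const_add (c : ℚ) (v : Fin (r + 1) → ℚ) :
    altA r ((fun _ ↦ c) + v) = (mono fun _ ↦ c) * altA r v := by
  rw [altA_eq_antisymm, mono_add, antisymm_mul (permInvariant_mono_const c), altA_eq_antisymm]

/-- The power sum `∑ᵢ e^{c εᵢ}`, i.e. the character of the natural module of `GL_k` with all weights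
multiplied by `c`. -/
def powerSum (k : ℕ) (c : ℚ) : CharRing k :=
  ∑ i, mono (Pi.single i c)

theorem permInvariant_powerSum (c : ℚ) : PermInvariant (powerSum k c) := by
  intro σ
  rw [powerSum, map_sum]
  refine Fintype.sum_equiv σ.symm _ _ fun i ↦ ?_
  rw [permChar_mono]
  congr 1
  ext j
  simp [Pi.single_apply, Equiv.eq_symm_apply]

theorem powerSum_mul_altA (c : ℚ) (v : Fin (r + 1) → ℚ) :
    powerSum (r + 1) c * altA r v = ∑ i, altA r (Pi.single i c + v) :=
  sum_mono_mul_altA (permInvariant_powerSum c) v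

/-- Adding `c` to any coordinate but the first makes two consecutive coordinates equal. -/
theorem powerSum_mul_altA_of_step {c : ℚ} {v : Fin (r + 1) → ℚ}
    (hv : ∀ i : Fin r, v i.castSucc = v i.succ + c) :
    powerSum (r + 1) c * altA r v = altA r (Pi.single 0 c + v) := by
  rw [powerSum_mul_altA, Fin.sum_univ_succ, add_eq_left]
  refine Finset.sum_eq_zero fun i _ ↦ altA_eq_zero (Fin.castSucc_lt_succ (i := i)).ne ?_
  simp [(Fin.castSucc_lt_succ (i := i)).ne, hv, add_comm]

/-- Subtracting `c` from any coordinate but the last makes two consecutive coordinates equal. -/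
theorem powerSum_neg_mul_altA_of_step {c : ℚ} {v : Fin (r + 1) → ℚ}
    (hv : ∀ i : Fin r, v i.castSucc = v i.succ + c) :
    powerSum (r + 1) (-c) * altA r v = altA r (Pi.single (Fin.last r) (-c) + v) := by
  rw [powerSum_mul_altA, Fin.sum_univ_castSucc, add_eq_right]
  refine Finset.sum_eq_zero fun i _ ↦ altA_eq_zero (Fin.castSucc_lt_succ (i := i)).ne ?_
  simp [(Fin.castSucc_lt_succ (i := i)).ne', hv]

theorem altA_eq_det (v : Fin (r + 1) → ℚ) :
    altA r v = (Matrix.of fun j i ↦ mono (Pi.single i (v j))).det := by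
  rw [Matrix.det_apply', altA]
  refine Finset.sum_congr rfl fun σ _ ↦ ?_
  simp only [Matrix.of_apply]
  rw [← mono_sum, Finset.univ_sum_single fun i ↦ v (σ i), zsmul_eq_mul]

/-- The root `εᵢ - εⱼ` of type `A`. -/
def rootA (i j : Fin k) : Fin k → ℚ :=
  Pi.single i 1 - Pi.single j 1

theorem sum_pairs_single_add_single (c : ℚ) :
    ∑ i : Fin (r + 1), ∑ j > i, (Pi.single i c + Pi.single j c : Fin (r + 1) → ℚ) =
      fun _ ↦ r * c := by
  have hfst (l : Fin (r + 1)) :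
      ∑ i : Fin (r + 1), ∑ _j > i, (Pi.single i c : Fin (r + 1) → ℚ) l = (r - l : ℕ) * c := by
    simp [Pi.single_apply, Finset.sum_ite_eq]
  have hsnd (l : Fin (r + 1)) :
      ∑ i : Fin (r + 1), ∑ j > i, (Pi.single j c : Fin (r + 1) → ℚ) l = l * c := by
    rw [Finset.sum_comm' (t' := Finset.univ) (s' := Finset.Iio) (by simp)]
    simp [Pi.single_apply]
  ext l
  simp only [Finset.sum_apply, Pi.add_apply, Finset.sum_add_distrib, hfst, hsnd]
  rw [← add_mul, Nat.cast_sub (Nat.le_of_lt_succ l.isLt), sub_add_cancel]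

theorem partLift_one_apply (i : Fin (r + 1)) : partLift r 1 i = r - i := by
  have hfilter : (Finset.range r).filter (fun j ↦ (i : ℕ) ≤ j) = Finset.Ico (i : ℕ) r := by
    ext j
    simp [and_comm]
  simp only [partLift, Pi.one_apply, Nat.cast_one]
  rw [Finset.sum_filter, Fin.sum_univ_eq_sum_range (fun j ↦ if (i : ℕ) ≤ j then (1 : ℚ) else 0),
    ← Finset.sum_filter, hfilter, Finset.sum_const, Nat.card_Ico]
  simp [Nat.cast_sub (Nat.le_of_lt_succ i.isLt)]

theorem slWt_one_apply (i : Fin (r + 1)) : slWt r 1 i = r / 2 - i := by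
  have hsum : ∑ j : Fin r, ((j : ℚ) + 1) * ((1 : Fin r → ℕ) j : ℚ) = r * (r + 1) / 2 := by
    clear i
    simp only [Pi.one_apply, Nat.cast_one, mul_one]
    rw [Fin.sum_univ_eq_sum_range (fun j ↦ (j : ℚ) + 1)]
    induction r with
    | zero => simp
    | succ r ih =>
      rw [Finset.sum_range_succ, ih]
      push_cast
      ring
  rw [slWt, partLift_one_apply, hsum]
  field_simp
  ring

theorem rhoA_eq_add_slWt_one (r : ℕ) : rhoA r = (fun _ ↦ (r : ℚ) / 2) + slWt r 1 := by
  ext i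
  simp only [rhoA, Pi.add_apply, slWt_one_apply]
  ring

theorem slWt_one_add_rhoA_castSucc (i : Fin r) :
    (slWt r 1 + rhoA r) i.castSucc = (slWt r 1 + rhoA r) i.succ + 2 := by
  simp only [Pi.add_apply, slWt_one_apply, rhoA_castSucc, Fin.val_castSucc, Fin.val_succ]
  push_cast
  ring

/-- The Weyl denominator formula `∑_σ sgn(σ) e^{cσρ} = ∏_{α > 0} (e^{cα/2} - e^{-cα/2})`,
a rescaled Vandermonde determinant. -/
theorem altA_smul_slWt_one (c : ℚ) :
    altA r (c • slWt r 1) =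
      ∏ i, ∏ j > i, (mono ((c / 2) • rootA i j) - mono (-(c / 2) • rootA i j)) := by
  have hentry (i j : Fin (r + 1)) : mono (Pi.single i ((c • slWt r 1) j)) =
      mono (Pi.single i (r * (c / 2))) *
        Matrix.vandermonde (fun i ↦ mono (Pi.single i (-c))) i j := by
    rw [Matrix.vandermonde_apply, ← mono_nsmul, ← mono_add, ← Pi.single_smul, ← Pi.single_add]
    congr 2
    simp only [Pi.smul_apply, slWt_one_apply, smul_eq_mul, nsmul_eq_mul]
    ring
  have hshift : ∏ i : Fin (r + 1), mono (Pi.single i (r * (c / 2))) =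
      ∏ i : Fin (r + 1), ∏ j > i, mono (Pi.single i (c / 2) + Pi.single j (c / 2)) := by
    simp only [← mono_sum, sum_pairs_single_add_single]
    rw [Finset.univ_sum_single fun _ ↦ (r : ℚ) * (c / 2)]
  calc altA r (c • slWt r 1)
      = (∏ i, mono (Pi.single i (r * (c / 2)))) *
          ∏ i, ∏ j > i, (mono (Pi.single j (-c)) - mono (Pi.single i (-c))) := by
        rw [← Matrix.det_vandermonde, ← Matrix.det_transpose (Matrix.vandermonde _),
          ← Matrix.det_mul_row, altA_eq_det]
        simp only [hentry, Matrix.transpose_apply]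
    _ = ∏ i, ∏ j > i, mono (Pi.single i (c / 2) + Pi.single j (c / 2)) *
          (mono (Pi.single j (-c)) - mono (Pi.single i (-c))) := by
        simp only [hshift, Finset.prod_mul_distrib]
    _ = _ := by
        refine Finset.prod_congr rfl fun i _ ↦ Finset.prod_congr rfl fun j _ ↦ ?_
        rw [mul_sub, ← mono_add, ← mono_add, rootA]
        congr 2 <;> ext l <;> simp [Pi.single_apply] <;> split_ifs <;> ring

/-- The factor `e^{v/2} + e^{-v/2}` contributed by the pair of weights `±v` of an orthogonal
representation to the restriction of the spin character. -/
def spinFactor (v : Fin k → ℚ) : CharRing k :=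
  mono ((1 / 2 : ℚ) • v) + mono (-(1 / 2 : ℚ) • v)

/-- The character of `V(ρ)` is the quotient of the Weyl denominator for `2ρ` by that for `ρ`. -/
theorem isCharA_one_prod_spinFactor (r : ℕ) :
    IsCharA r 1 (∏ i, ∏ j > i, spinFactor (rootA i j)) := by
  have hfactor (v : Fin (r + 1) → ℚ) : (mono ((1 / 2 : ℚ) • v) - mono (-(1 / 2 : ℚ) • v)) *
      spinFactor v = mono v - mono (-v) := by
    rw [spinFactor, mul_add, sub_mul, sub_mul]
    simp only [← mono_add, ← add_smul]
    norm_num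
  have hdouble : slWt r 1 + rhoA r = (fun _ ↦ (r : ℚ) / 2) + (2 : ℚ) • slWt r 1 := by
    rw [rhoA_eq_add_slWt_one, two_smul]
    abel
  rw [IsCharA, hdouble, rhoA_eq_add_slWt_one, altA_const_add, altA_const_add, mul_assoc]
  congr 1
  rw [← one_smul ℚ (slWt r 1), altA_smul_slWt_one, one_smul, altA_smul_slWt_one]
  simp only [← Finset.prod_mul_distrib, hfactor]
  simp

end TypeA

section SignChanges

variable {k : ℕ}

/-- The weight with coordinates `±1` given by a sign vector. -/
def signWt (s : Fin k → ℤˣ) : Fin k → ℚ :=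
  fun i ↦ ((s i : ℤ) : ℚ)

theorem signWt_mul (s t : Fin k → ℤˣ) : signWt (s * t) = signWt s * signWt t := by
  ext i
  simp [signWt]

theorem signWt_neg (s : Fin k → ℤˣ) : signWt (-s) = -signWt s := by
  ext i
  simp [signWt]

/-- The action on characters of the sign changes of the coordinates given by a sign vector. -/
abbrev signChar (s : Fin k → ℤˣ) : CharRing k →+* CharRing k :=
  charMap (LinearMap.mulLeft ℚ (signWt s))

theorem signChar_mono (s : Fin k → ℤˣ) (v : Fin k → ℚ) :
    signChar s (mono v) = mono (signWt s * v) :=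
  charMap_mono _ _

theorem permInvariant_sum_signWt (c : ℚ) {P : (Fin k → ℤˣ) → Prop} [DecidablePred P]
    (hP : ∀ (s : Fin k → ℤˣ) (σ : Equiv.Perm (Fin k)), P (s ∘ σ) ↔ P s) :
    PermInvariant (∑ s with P s, mono (c • signWt s)) := by
  intro σ
  rw [map_sum]
  refine Finset.sum_equiv (σ.symm.arrowCongr (Equiv.refl _)) (fun s ↦ ?_)
    fun s _ ↦ permChar_mono _ _
  rw [Finset.mem_filter_univ, Finset.mem_filter_univ]
  exact (hP s σ).symm

/-- A character is invariant under even sign changes if it is fixed by all sign changes of an even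
number of coordinates; together with the permutations these generate the Weyl group of type `D`. -/
def EvenSignInvariant (F : CharRing k) : Prop :=
  ∀ s : Fin k → ℤˣ, ∏ i, s i = 1 → signChar s F = F

/-- The sum of the images of a character under all even sign changes of the coordinates. -/
def evenSymm (k : ℕ) : CharRing k →+ CharRing k :=
  ∑ s : Fin k → ℤˣ with ∏ i, s i = 1, (signChar s).toAddMonoidHom

theorem evenSymm_apply (F : CharRing k) :
    evenSymm k F = ∑ s : Fin k → ℤˣ with ∏ i, s i = 1, signChar s F := by
  simp [evenSymm]

theorem evenSymm_mul {F : CharRing k} (hF : EvenSignInvariant F) (G : CharRing k) :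
    evenSymm k (F * G) = F * evenSymm k G := by
  rw [evenSymm_apply, evenSymm_apply, Finset.mul_sum]
  refine Finset.sum_congr rfl fun s hs ↦ ?_
  rw [map_mul, hF s ((Finset.mem_filter_univ s).1 hs)]

theorem evenSymm_mono_signWt_mul {t : Fin k → ℤˣ} (ht : ∏ i, t i = 1) (v : Fin k → ℚ) :
    evenSymm k (mono (signWt t * v)) = evenSymm k (mono v) := by
  rw [evenSymm_apply, evenSymm_apply]
  refine Finset.sum_equiv (Equiv.mulRight t) (fun s ↦ ?_) fun s _ ↦ ?_
  · simp [Finset.prod_mul_distrib, ht]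
  · rw [signChar_mono, signChar_mono, Equiv.coe_mulRight, signWt_mul, mul_assoc]

end SignChanges

section TypeD

variable {n r : ℕ}

theorem altY_D_eq_sum (v : Fin n → ℚ) :
    altY .D n v = ∑ σ : Equiv.Perm (Fin n), ∑ s : Fin n → ℤˣ with ∏ i, s i = 1,
      ((Equiv.Perm.sign σ : ℤˣ) : ℤ) • mono (signWt s * v ∘ σ) := by
  have hbij : Function.Bijective fun b : Bool ↦ if b then (-1 : ℤˣ) else 1 := by decide
  have hprod (s : Fin n → Bool) :
      ∏ i, (if s i then (-1 : ℤˣ) else 1) =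
        (-1) ^ (Finset.univ.filter fun i ↦ s i = true).card := by
    rw [Finset.prod_ite, Finset.prod_const, Finset.prod_const_one, mul_one]
  refine Finset.sum_congr rfl fun σ _ ↦ ?_
  rw [Finset.sum_filter]
  refine Fintype.sum_bijective _ hbij.comp_left _ _ fun s ↦ ?_
  simp only [Function.comp_apply, hprod, true_and,
    neg_one_pow_eq_one_iff_even (R := ℤˣ) (by decide), ite_not]
  refine ite_congr rfl (fun heven ↦ ?_) fun _ ↦ rfl
  rw [heven.neg_one_pow, mul_one]
  congr 2
  ext i
  by_cases h : s i <;> simp [signWt, h]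

theorem altY_D_eq_evenSymm (v : Fin n → ℚ) :
    altY .D n v = evenSymm n (antisymm n (mono v)) := by
  rw [altY_D_eq_sum, antisymm_mono, map_sum]
  simp only [map_zsmul, evenSymm_apply, signChar_mono, Finset.smul_sum]

theorem altY_D_comp_perm (v : Fin n → ℚ) (σ : Equiv.Perm (Fin n)) :
    altY .D n (v ∘ σ) = ((Equiv.Perm.sign σ : ℤˣ) : ℤ) • altY .D n v := by
  rw [altY_D_eq_evenSymm, altY_D_eq_evenSymm, antisymm_mono_comp, map_zsmul]

theorem altY_D_signWt_mul {t : Fin n → ℤˣ} (ht : ∏ i, t i = 1) (v : Fin n → ℚ) :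
    altY .D n (signWt t * v) = altY .D n v := by
  simp only [altY_D_eq_evenSymm, antisymm_mono, map_sum, map_zsmul]
  refine Finset.sum_congr rfl fun σ _ ↦ congrArg _ ?_
  exact evenSymm_mono_signWt_mul ((Equiv.prod_comp σ t).trans ht) (v ∘ σ)

theorem altY_D_eq_zero {v : Fin n → ℚ} {i j : Fin n} (hij : i ≠ j) (hv : |v i| = |v j|) :
    altY .D n v = 0 := by
  obtain ⟨δ, hδ⟩ : ∃ δ : ℤˣ, v i = (δ : ℤ) * v j := by
    rcases abs_eq_abs.1 hv with h | h
    · exact ⟨1, by simp [h]⟩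
    · exact ⟨-1, by simp [h]⟩
  have hδ' : v j = (δ : ℤ) * v i := by
    rw [hδ, ← mul_assoc, ← Int.cast_mul, Int.units_coe_mul_self, Int.cast_one, one_mul]
  set t : Fin n → ℤˣ := Pi.mulSingle i δ * Pi.mulSingle j δ with ht
  have hprod : ∏ l, t l = 1 := by
    simp [ht, Finset.prod_mul_distrib, Int.units_mul_self]
  have hswap : v ∘ Equiv.swap i j = signWt t * v := by
    ext l
    by_cases hi : l = i
    · subst hi
      simp [ht, signWt, hij, hδ']
    by_cases hj : l = j
    · subst hj
      simp [ht, signWt, hij.symm, hδ]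
    · simp [ht, signWt, Equiv.swap_apply_of_ne_of_ne hi hj, hi, hj]
  refine eq_zero_of_eq_neg ?_
  rw [← neg_one_zsmul, ← Units.val_one, ← Units.val_neg, ← Equiv.Perm.sign_swap hij,
    ← altY_D_comp_perm, hswap, altY_D_signWt_mul hprod]

theorem altY_D_ne_zero {v : Fin n → ℚ} (hv : Function.Injective fun i ↦ |v i|) :
    altY .D n v ≠ 0 := by
  rw [altY_D_eq_sum, ← Finset.sum_product']
  refine sum_smul_mono_ne_zero (a := (1, 1)) (by simp) (by simp) fun ⟨σ, s⟩ hs h ↦ ?_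
  replace hs : ∏ i, s i = 1 := by simpa using hs
  have happ (i : Fin n) : ((s i : ℤ) : ℚ) * v (σ i) = v i := by
    simpa [signWt] using congrFun h i
  have hσ (i : Fin n) : σ i = i := by
    refine hv ?_
    simp only [← happ i, abs_mul, ← Int.cast_abs, Int.isUnit_iff_abs_eq.1 (s i).isUnit,
      Int.cast_one, one_mul]
  have hs_one (i : Fin n) (hi : v i ≠ 0) : s i = 1 := by
    have := happ i
    rw [hσ, mul_eq_right₀ hi] at this
    exact Units.val_eq_one.1 (Int.cast_eq_one.1 this)
  refine Prod.ext (Equiv.ext hσ) (funext fun i ↦ ?_)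
  by_cases hi : v i = 0
  · rwa [Fintype.prod_eq_single i] at hs
    intro j hji
    exact hs_one j fun hj ↦ hji (hv (by simp [hi, hj]))
  · exact hs_one i hi

theorem rhoY_D_succ_apply (n : ℕ) (i : Fin (n + 1)) : rhoY .D (n + 1) i = n - i := by
  simp [rhoY]

theorem altY_D_rhoY_ne_zero (n : ℕ) : altY .D (n + 1) (rhoY .D (n + 1)) ≠ 0 := by
  refine altY_D_ne_zero fun i j h ↦ ?_
  have habs (l : Fin (n + 1)) : |rhoY .D (n + 1) l| = n - l := by
    rw [rhoY_D_succ_apply, abs_of_nonneg (sub_nonneg.2 (mod_cast l.is_le))]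
  simpa [habs, Fin.val_inj] using h

theorem IsCharY.unique_D {c : Fin (n + 1) → ℕ} {f g : CharRing (n + 1)}
    (hf : IsCharY .D (n + 1) c f) (hg : IsCharY .D (n + 1) c g) : f = g :=
  mul_left_cancel₀ (altY_D_rhoY_ne_zero n) (Eq.trans hf (Eq.symm hg))

end TypeD

section HalfSpin

variable {n r : ℕ}

/-- The sum of the exponentials of the weights `(±1/2, …, ±1/2)` whose signs have product `p`: this
is the character of one of the two half-spin modules of type `D`. -/
def halfSpinChar (n : ℕ) (p : ℤˣ) : CharRing n :=
  ∑ s : Fin n → ℤˣ with ∏ i, s i = p, mono ((1 / 2 : ℚ) • signWt s)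

theorem permInvariant_halfSpinChar (n : ℕ) (p : ℤˣ) : PermInvariant (halfSpinChar n p) :=
  permInvariant_sum_signWt _ fun s σ ↦ by rw [← Equiv.prod_comp σ s]; rfl

theorem evenSignInvariant_halfSpinChar (n : ℕ) (p : ℤˣ) : EvenSignInvariant (halfSpinChar n p) := by
  intro t ht
  rw [halfSpinChar, map_sum]
  refine Finset.sum_equiv (Equiv.mulLeft t) (fun s ↦ ?_) fun s _ ↦ ?_
  · simp [Finset.prod_mul_distrib, ht]
  · rw [signChar_mono, mul_smul_comm, Equiv.coe_mulLeft, signWt_mul]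

theorem halfSpinChar_mul_altY (p : ℤˣ) (v : Fin n → ℚ) :
    halfSpinChar n p * altY .D n v =
      ∑ s : Fin n → ℤˣ with ∏ i, s i = p, altY .D n ((1 / 2 : ℚ) • signWt s + v) := by
  rw [altY_D_eq_evenSymm, ← evenSymm_mul (evenSignInvariant_halfSpinChar n p),
    ← antisymm_mul (permInvariant_halfSpinChar n p), halfSpinChar, Finset.sum_mul, map_sum, map_sum]
  simp only [altY_D_eq_evenSymm, mono_add]

/-- If some coordinate but the last has sign `-1`, then the last such coordinate `i` has
`|vᵢ| = |vᵢ₊₁|` for `v = s / 2 + ρ`. -/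
theorem eq_mulSingle_of_altY_D_ne_zero {s : Fin (n + 1) → ℤˣ}
    (hs : altY .D (n + 1) ((1 / 2 : ℚ) • signWt s + rhoY .D (n + 1)) ≠ 0) :
    s = Pi.mulSingle (Fin.last n) (∏ i, s i) := by
  have hstep (j : Fin n) (hj : j.succ = Fin.last n ∨ s j.succ = 1) : s j.castSucc = 1 := by
    by_contra hneg
    refine hs (altY_D_eq_zero (Fin.castSucc_lt_succ (i := j)).ne ?_)
    have hcast : s j.castSucc = -1 := (Int.units_eq_one_or _).resolve_left hneg
    simp only [Pi.add_apply, Pi.smul_apply, smul_eq_mul, signWt, hcast, rhoY_D_succ_apply]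
    obtain hlast | hsucc := hj
    · have hn : (n : ℚ) = j + 1 := by exact_mod_cast (congrArg Fin.val hlast).symm
      obtain h | h := Int.units_eq_one_or (s j.succ)
      all_goals
        rw [h, hn, Fin.val_castSucc, Fin.val_succ]
        norm_num [abs]
    · rw [hsucc, Fin.val_castSucc, Fin.val_succ]
      congr 1
      push_cast
      ring
  have hone (i : Fin (n + 1)) : i = Fin.last n ∨ s i = 1 := by
    induction i using Fin.reverseInduction with
    | last => exact Or.inl rfl
    | cast j ih => exact Or.inr (hstep j ih)
  have hne (i : Fin (n + 1)) (hi : i ≠ Fin.last n) : s i = 1 := (hone i).resolve_left hi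
  ext i
  rw [Fintype.prod_eq_single _ hne]
  obtain rfl | hi := eq_or_ne i (Fin.last n)
  · rw [Pi.mulSingle_eq_same]
  · rw [Pi.mulSingle_eq_of_ne hi, hne i hi]

theorem altY_D_rhoY_mul_halfSpinChar (n : ℕ) (p : ℤˣ) :
    altY .D (n + 1) (rhoY .D (n + 1)) * halfSpinChar (n + 1) p =
      altY .D (n + 1) ((1 / 2 : ℚ) • signWt (Pi.mulSingle (Fin.last n) p) + rhoY .D (n + 1)) := by
  rw [mul_comm, halfSpinChar_mul_altY]
  refine Finset.sum_eq_single_of_mem _ (by simp) fun s hs hne ↦ ?_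
  contrapose! hne
  rw [← (Finset.mem_filter_univ s).1 hs]
  exact eq_mulSingle_of_altY_D_ne_zero hne

theorem sum_filter_le_e {m : ℕ} (hm : m < n) (i : ℕ) :
    ∑ k ∈ Finset.univ.filter (fun k : Fin n ↦ i ≤ (k : ℕ)), (e n (m + 1) k : ℚ) =
      if i ≤ m then 1 else 0 := by
  have he (k : Fin n) : (e n (m + 1) k : ℚ) = if k = ⟨m, hm⟩ then 1 else 0 := by
    simp [e, Fin.ext_iff]
  simp only [he, Finset.sum_ite_eq', Finset.mem_filter_univ]

theorem isCharY_halfSpinChar_one (n : ℕ) :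
    IsCharY .D (n + 2) (e (n + 2) (n + 2)) (halfSpinChar (n + 2) 1) := by
  have hwt : epsWt .D (n + 2) (e (n + 2) (n + 2)) =
      (1 / 2 : ℚ) • signWt (Pi.mulSingle (Fin.last (n + 1)) 1) := by
    ext i
    rw [epsWt, sum_filter_le_e (m := n + 1) (by lia)]
    rw [if_pos i.is_le]
    norm_num [cval, e, signWt]
  rw [IsCharY, altY_D_rhoY_mul_halfSpinChar, hwt]

theorem isCharY_halfSpinChar_neg_one (n : ℕ) :
    IsCharY .D (n + 2) (e (n + 2) (n + 1)) (halfSpinChar (n + 2) (-1)) := by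
  have hwt : epsWt .D (n + 2) (e (n + 2) (n + 1)) =
      (1 / 2 : ℚ) • signWt (Pi.mulSingle (Fin.last (n + 1)) (-1)) := by
    ext i
    rw [epsWt, sum_filter_le_e (m := n) (by lia)]
    obtain rfl | ⟨j, rfl⟩ := i.eq_castSucc_or_eq_last.symm
    · norm_num [cval, e, signWt]
    · rw [Fin.val_castSucc, if_pos j.is_le]
      norm_num [cval, e, signWt, Pi.mulSingle_eq_of_ne j.castSucc_lt_last.ne]
  rw [IsCharY, altY_D_rhoY_mul_halfSpinChar, hwt]

theorem sum_signs_mono_eq_prod_spinFactor (w : Fin n → Fin r → ℚ) :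
    ∑ s : Fin n → ℤˣ, mono (∑ i, ((1 / 2 : ℚ) • signWt s) i • w i) = ∏ i, spinFactor (w i) := by
  have hfactor (v : Fin r → ℚ) : spinFactor v = ∑ ε : ℤˣ, mono ((1 / 2 * (ε : ℤ) : ℚ) • v) := by
    rw [UnitsInt.univ, Finset.sum_pair (by decide), spinFactor]
    simp
  simp only [hfactor, Fintype.prod_sum, mono_sum]
  rfl

/-- If some `w i` vanishes, then changing the `i`-th sign does not change the restricted weight, so
both half-spin characters restrict to half of the spin character. -/
theorem two_mul_resChar_halfSpinChar (p : ℤˣ) {w : Fin n → Fin (r + 1) → ℚ}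
    (hw : ∃ i, w i = 0) : 2 * resChar w (halfSpinChar n p) = ∏ i, spinFactor (w i) := by
  obtain ⟨i₀, hi₀⟩ := hw
  have hres : resChar w (halfSpinChar n p) = ∑ s : Fin n → ℤˣ with ∏ i, s i = p,
      mono (∑ i, ((1 / 2 : ℚ) • signWt s) i • w i) := by
    rw [resChar_eq_charMap, halfSpinChar, map_sum]
    simp only [charMap_mono, Fintype.linearCombination_apply]
  have hflip : ∑ s : Fin n → ℤˣ with ¬∏ i, s i = p, mono (∑ i, ((1 / 2 : ℚ) • signWt s) i • w i) =
      resChar w (halfSpinChar n p) := by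
    rw [hres]
    refine Finset.sum_equiv (Equiv.mulLeft (Pi.mulSingle i₀ (-1))) (fun s ↦ ?_) fun s _ ↦ ?_
    · simp [Finset.prod_mul_distrib, Int.units_ne_iff_eq_neg, neg_eq_iff_eq_neg]
    · congr 1
      refine Finset.sum_congr rfl fun i _ ↦ ?_
      obtain rfl | hi := eq_or_ne i i₀
      · rw [hi₀, smul_zero, smul_zero]
      · simp [signWt, hi]
  rw [← sum_signs_mono_eq_prod_spinFactor,
    ← Finset.sum_filter_add_sum_filter_not _ (fun s : Fin n → ℤˣ ↦ ∏ i, s i = p), hflip, ← hres,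
    two_mul]

end HalfSpin

section WeightSystem

variable {n r : ℕ} {δ : Fin r → ℕ} {w w' : Fin n → Fin (r + 1) → ℚ}

theorem charDim_spinFactor {k : ℕ} (v : Fin k → ℚ) : charDim k (spinFactor v) = 2 := by
  rw [spinFactor, map_add, charDim_mono, charDim_mono, one_add_one_eq_two]

theorem spinFactor_neg {k : ℕ} (v : Fin k → ℚ) : spinFactor (-v) = spinFactor v := by
  rw [spinFactor, spinFactor, smul_neg, neg_smul, neg_smul, smul_neg, neg_neg, add_comm]

theorem spinFactor_zero {k : ℕ} : spinFactor (0 : Fin k → ℚ) = 2 := by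
  rw [spinFactor, smul_zero, smul_zero, mono_zero, one_add_one_eq_two]

/-- The multiset of all `± w i`: the weights of the natural module of an orthogonal group of type
`D` restricted along `w`. -/
def pmWeights {k : ℕ} (w : Fin n → Fin k → ℚ) : Multiset (Fin k → ℚ) :=
  Finset.univ.val.map w + Finset.univ.val.map (-w)

theorem wtSys_D_iff : WtSys .D n r δ w ↔
    ((pmWeights w).map mono).sum * altA r (rhoA r) = altA r (slWt r δ + rhoA r) := by
  rw [WtSys, if_neg CType.noConfusion, add_zero, Finset.sum_add_distrib, pmWeights,
    Multiset.map_add, Multiset.map_map, Multiset.map_map, Multiset.sum_add]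
  rfl

theorem pmWeights_eq (hw : WtSys .D n r δ w) (hw' : WtSys .D n r δ w') :
    pmWeights w = pmWeights w' :=
  sum_map_mono_injective (mul_right_cancel₀ (altA_ne_zero (rhoA_injective r))
    ((wtSys_D_iff.1 hw).trans (wtSys_D_iff.1 hw').symm))

theorem zero_mem_pmWeights {k : ℕ} {w : Fin n → Fin k → ℚ} : 0 ∈ pmWeights w ↔ ∃ i, w i = 0 := by
  simp [pmWeights]

theorem prod_map_spinFactor_pmWeights {k : ℕ} (w : Fin n → Fin k → ℚ) :
    ((pmWeights w).map spinFactor).prod = (∏ i, spinFactor (w i)) ^ 2 := by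
  have hneg : spinFactor ∘ (-w) = spinFactor ∘ w := funext fun i ↦ spinFactor_neg (w i)
  rw [pmWeights, Multiset.map_add, Multiset.map_map, Multiset.map_map, Multiset.prod_add, hneg, sq]
  rfl

/-- The two products have the same square, and dimension `2 ^ n` singles out the right square
root. -/
theorem prod_spinFactor_eq (hw : WtSys .D n r δ w) (hw' : WtSys .D n r δ w') :
    ∏ i, spinFactor (w i) = ∏ i, spinFactor (w' i) := by
  have hsq : (∏ i, spinFactor (w i)) ^ 2 = (∏ i, spinFactor (w' i)) ^ 2 := by
    rw [← prod_map_spinFactor_pmWeights, ← prod_map_spinFactor_pmWeights, pmWeights_eq hw hw']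
  refine (sq_eq_sq_iff_eq_or_eq_neg.1 hsq).resolve_right fun hneg ↦ ?_
  have hdim := congrArg (charDim (r + 1)) hneg
  simp only [map_neg, map_prod, charDim_spinFactor, Finset.prod_const] at hdim
  have hpos : (0 : ℤ) < 2 ^ (Finset.univ : Finset (Fin n)).card := by positivity
  linarith

end WeightSystem

section Decomposition

variable {r : ℕ}

theorem exists_decomp_of_eq_add {F : CharRing (r + 1)} {μ ν : Fin r → ℕ} (hμν : μ ≠ ν)
    (hF : F * altA r (rhoA r) = altA r (slWt r μ + rhoA r) + altA r (slWt r ν + rhoA r)) :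
    ∃ c : (Fin r → ℕ) →₀ ℕ, Decomp r F c ∧ ∀ κ, c κ ≤ 1 := by
  refine ⟨Finsupp.single μ 1 + Finsupp.single ν 1, ?_, fun κ ↦ ?_⟩
  · rw [Decomp, hF, Finsupp.sum_add_index' (by simp) (by intros; push_cast; rw [add_smul])]
    simp
  · simp only [Finsupp.add_apply, Finsupp.single_apply]
    split_ifs with h₁ h₂
    · exact absurd (h₁.trans h₂.symm) hμν
    all_goals simp

end Decomposition

section RootPairs

theorem powerSum_one_mul_powerSum_neg_one (k : ℕ) : powerSum k 1 * powerSum k (-1) =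
    k + ∑ i : Fin k, ∑ j > i, (mono (rootA i j) + mono (-rootA i j)) := by
  have hterm (i j : Fin k) : mono (Pi.single i (1 : ℚ)) * mono (Pi.single j (-1 : ℚ)) =
      mono (rootA i j) := by
    rw [← mono_add, Pi.single_neg, ← sub_eq_add_neg, rootA]
  have hneg (i j : Fin k) : -rootA i j = rootA j i := neg_sub _ _
  have hdiag (i : Fin k) : mono (rootA i i) = 1 := by rw [rootA, sub_self, mono_zero]
  simp only [powerSum, Finset.sum_mul_sum, hterm, hneg]
  rw [Finset.sum_sum_Ioi_add_eq_sum_sum_off_diag fun i j ↦ mono (rootA j i)]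
  calc ∑ i : Fin k, ∑ j, mono (rootA i j)
      = ∑ i : Fin k, (1 + ∑ j ∈ {i}ᶜ, mono (rootA i j)) :=
        Finset.sum_congr rfl fun i _ ↦ by rw [Fintype.sum_eq_add_sum_compl i, hdiag]
    _ = k + ∑ i : Fin k, ∑ j ∈ {i}ᶜ, mono (rootA i j) := by simp [Finset.sum_add_distrib]

end RootPairs

section A3

/-- Representatives of the three pairs `±s` of sign vectors with two signs of each kind. The weights
of the module `V(2ω₂)` of type `A₃` are the corresponding `signWt`, the roots, and zero. -/
def balancedSign : Fin 3 → Fin 4 → ℤˣ :=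
  ![![1, 1, -1, -1], ![1, -1, 1, -1], ![1, -1, -1, 1]]

/-- Representatives of the pairs `±v` of weights of the module `V(2ω₂)` of type `A₃`; the zero
weight, of multiplicity two, forms a single pair. -/
def weightA3 : Fin 10 → Fin 4 → ℚ :=
  ![signWt (balancedSign 0), signWt (balancedSign 1), signWt (balancedSign 2),
    rootA 0 1, rootA 0 2, rootA 0 3, rootA 1 2, rootA 1 3, rootA 2 3, 0]

@[to_additive]
theorem prod_weightA3 {M : Type*} [CommMonoid M] (f : (Fin 4 → ℚ) → M) : ∏ i, f (weightA3 i) =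
    (∏ i, f (signWt (balancedSign i))) * (∏ i : Fin 4, ∏ j > i, f (rootA i j)) * f 0 := by
  simp [Fin.prod_univ_succ, Fin.prod_Ioi_succ, weightA3, mul_assoc]

theorem rhoA_three : rhoA 3 = ![3, 2, 1, 0] := by
  ext i
  fin_cases i <;> norm_num [rhoA]

theorem single_zero_eq_vec (a : ℚ) : (Pi.single 0 a : Fin 4 → ℚ) = ![a, 0, 0, 0] := by
  ext i
  fin_cases i <;> rfl

theorem single_one_eq_vec (a : ℚ) : (Pi.single 1 a : Fin 4 → ℚ) = ![0, a, 0, 0] := by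
  ext i
  fin_cases i <;> rfl

theorem single_two_eq_vec (a : ℚ) : (Pi.single 2 a : Fin 4 → ℚ) = ![0, 0, a, 0] := by
  ext i
  fin_cases i <;> rfl

theorem single_three_eq_vec (a : ℚ) : (Pi.single 3 a : Fin 4 → ℚ) = ![0, 0, 0, a] := by
  ext i
  fin_cases i <;> rfl

theorem slWt_three (a b c : ℕ) : slWt 3 ![a, b, c] =
    ![(3 * a + 2 * b + c : ℚ) / 4, (-a + 2 * b + c : ℚ) / 4, (-a - 2 * b + c : ℚ) / 4,
      (-a - 2 * b - 3 * c : ℚ) / 4] := by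
  ext i
  have hpart : partLift 3 ![a, b, c] i = ![(a + b + c : ℚ), b + c, c, 0] i := by
    fin_cases i <;> simp [partLift, Finset.sum_filter, Fin.sum_univ_succ, ← add_assoc]
  rw [slWt, hpart, Fin.sum_univ_three]
  fin_cases i <;> simp <;> ring

theorem signWt_balancedSign_zero : signWt (balancedSign 0) = ![1, 1, -1, -1] := by
  ext i
  fin_cases i <;> norm_num [signWt, balancedSign]

theorem signWt_balancedSign_one : signWt (balancedSign 1) = ![1, -1, 1, -1] := by
  ext i
  fin_cases i <;> norm_num [signWt, balancedSign]

theorem signWt_balancedSign_two : signWt (balancedSign 2) = ![1, -1, -1, 1] := by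
  ext i
  fin_cases i <;> simp [signWt, show balancedSign 2 = ![1, -1, -1, 1] from rfl]

theorem filter_sum_eq_zero_eq_balancedSign :
    (Finset.univ.filter fun s : Fin 4 → ℤˣ ↦ ∑ i, (s i : ℤ) = 0) =
    {balancedSign 0, -balancedSign 0, balancedSign 1, -balancedSign 1, balancedSign 2,
      -balancedSign 2} := by
  decide

theorem sum_filter_sum_eq_zero {M : Type*} [AddCommMonoid M] (f : (Fin 4 → ℤˣ) → M) :
    ∑ s with ∑ i, (s i : ℤ) = 0, f s = ∑ i, (f (balancedSign i) + f (-balancedSign i)) := by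
  rw [filter_sum_eq_zero_eq_balancedSign, Fin.sum_univ_three]
  repeat rw [Finset.sum_insert (by decide)]
  rw [Finset.sum_singleton]
  ac_rfl

theorem altA_swap_one_two (a b c d : ℚ) : altA 3 ![a, c, b, d] = -altA 3 ![a, b, c, d] := by
  have hswap : ![a, c, b, d] = ![a, b, c, d] ∘ Equiv.swap (1 : Fin 4) 2 := by
    ext i
    fin_cases i <;> rfl
  rw [hswap, altA_comp_perm, Equiv.Perm.sign_swap (by decide), Units.val_neg, Units.val_one,
    neg_one_zsmul]

theorem altA_swap_zero_one_swap_two_three (a b c d : ℚ) :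
    altA 3 ![b, a, d, c] = altA 3 ![a, b, c, d] := by
  have hswap : ![b, a, d, c] = ![a, b, c, d] ∘ (Equiv.swap 0 1 * Equiv.swap 2 3 :
      Equiv.Perm (Fin 4)) := by
    ext i
    fin_cases i <;> rfl
  have hsign : Equiv.Perm.sign (Equiv.swap 0 1 * Equiv.swap 2 3 : Equiv.Perm (Fin 4)) = 1 := by
    decide
  rw [hswap, altA_comp_perm, hsign, Units.val_one, one_zsmul]

theorem sum_balancedSign_mul_altA_rhoA :
    (∑ i, (mono (signWt (balancedSign i)) + mono (-signWt (balancedSign i)))) * altA 3 (rhoA 3) =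
      altA 3 ![4, 3, 0, -1] - altA 3 ![4, 2, 1, -1] + altA 3 (rhoA 3) := by
  have hinv : PermInvariant (∑ s : Fin 4 → ℤˣ with ∑ i, (s i : ℤ) = 0, mono (signWt s)) := by
    simpa only [one_smul] using permInvariant_sum_signWt 1 fun (s : Fin 4 → ℤˣ) σ ↦ by
      rw [← Equiv.sum_comp σ fun i ↦ (s i : ℤ)]
      rfl
  have hprod := sum_mono_mul_altA hinv (rhoA 3)
  simp only [sum_filter_sum_eq_zero, signWt_neg, Fin.sum_univ_three] at hprod
  rw [Fin.sum_univ_three, hprod]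
  have hvec : signWt (balancedSign 0) + rhoA 3 = ![4, 3, 0, -1] ∧
      -signWt (balancedSign 0) + rhoA 3 = ![2, 1, 2, 1] ∧
      signWt (balancedSign 1) + rhoA 3 = ![4, 1, 2, -1] ∧
      -signWt (balancedSign 1) + rhoA 3 = ![2, 3, 0, 1] ∧
      signWt (balancedSign 2) + rhoA 3 = ![4, 1, 0, 1] ∧
      -signWt (balancedSign 2) + rhoA 3 = ![2, 3, 2, -1] := by
    rw [signWt_balancedSign_zero, signWt_balancedSign_one, signWt_balancedSign_two, rhoA_three]
    norm_num
  obtain ⟨h₀, h₀', h₁, h₁', h₂, h₂'⟩ := hvec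
  rw [h₀, h₀', h₁, h₁', h₂, h₂', altA_swap_one_two 4 2 1, altA_swap_zero_one_swap_two_three 3 2 1 0,
    altA_eq_zero (v := ![2, 1, 2, 1]) (i := 0) (j := 2) (by decide) rfl,
    altA_eq_zero (v := ![4, 1, 0, 1]) (i := 1) (j := 3) (by decide) rfl,
    altA_eq_zero (v := ![2, 3, 2, -1]) (i := 0) (j := 2) (by decide) rfl, ← rhoA_three]
  ring

theorem powerSum_one_mul_powerSum_neg_one_mul_altA_rhoA :
    powerSum 4 1 * powerSum 4 (-1) * altA 3 (rhoA 3) =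
      altA 3 ![4, 2, 1, -1] + altA 3 (rhoA 3) := by
  have hlower : Pi.single (Fin.last 3) (-1) + rhoA 3 = ![3, 2, 1, -1] := by
    rw [show Fin.last 3 = 3 from rfl, single_three_eq_vec, rhoA_three]
    simp
  have h₀ : Pi.single 0 1 + ![3, 2, 1, -1] = (![4, 2, 1, -1] : Fin 4 → ℚ) := by
    norm_num [single_zero_eq_vec]
  have h₁ : altA 3 (Pi.single 1 1 + ![3, 2, 1, -1]) = 0 :=
    altA_eq_zero (i := 0) (j := 1) (by decide) (by norm_num [single_one_eq_vec])
  have h₂ : altA 3 (Pi.single 2 1 + ![3, 2, 1, -1]) = 0 :=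
    altA_eq_zero (i := 1) (j := 2) (by decide) (by
      simp only [single_two_eq_vec, Pi.add_apply, Matrix.cons_val_one, Matrix.cons_val_zero,
        Matrix.cons_val]
      norm_num)
  have h₃ : Pi.single 3 1 + ![3, 2, 1, -1] = rhoA 3 := by
    norm_num [rhoA_three, single_three_eq_vec]
  rw [mul_assoc, powerSum_neg_mul_altA_of_step rhoA_castSucc, hlower, powerSum_mul_altA,
    Fin.sum_univ_four, h₀, h₁, h₂, h₃, add_zero, add_zero]

theorem wtSys_weightA3 : WtSys .D 10 3 (2 • e 3 2) weightA3 := by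
  have hwt : slWt 3 (2 • e 3 2) + rhoA 3 = ![4, 3, 0, -1] := by
    rw [rhoA_three]
    ext i
    fin_cases i <;> norm_num [slWt, partLift, e, Finset.sum_filter, Fin.sum_univ_three]
  have hsum : ∑ i, (mono (weightA3 i) + mono (-weightA3 i)) =
      (∑ i, (mono (signWt (balancedSign i)) + mono (-signWt (balancedSign i)))) +
        powerSum 4 1 * powerSum 4 (-1) - 2 := by
    rw [sum_weightA3 fun v ↦ mono v + mono (-v), powerSum_one_mul_powerSum_neg_one, neg_zero,
      mono_zero]
    push_cast
    ring
  rw [WtSys, hsum, if_neg CType.noConfusion, add_zero, hwt, sub_mul, add_mul,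
    sum_balancedSign_mul_altA_rhoA, powerSum_one_mul_powerSum_neg_one_mul_altA_rhoA]
  ring

theorem prod_spinFactor_balancedSign : ∏ i, spinFactor (signWt (balancedSign i)) =
    (mono fun _ ↦ -(1 / 2)) * powerSum 4 2 + (mono fun _ ↦ 1 / 2) * powerSum 4 (-2) := by
  have hpow (c a : ℚ) : (mono fun _ : Fin 4 ↦ c) * powerSum 4 a = mono ![c + a, c, c, c] +
      mono ![c, c + a, c, c] + mono ![c, c, c + a, c] + mono ![c, c, c, c + a] := by
    simp only [powerSum, Fin.sum_univ_four, mul_add, ← mono_add, single_zero_eq_vec,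
      single_one_eq_vec, single_two_eq_vec, single_three_eq_vec]
    congr <;> ext i <;> fin_cases i <;> simp
  rw [hpow, hpow, Fin.prod_univ_three, signWt_balancedSign_zero, signWt_balancedSign_one,
    signWt_balancedSign_two]
  simp only [spinFactor, mul_add, add_mul, ← mono_add]
  norm_num
  abel

theorem resChar_halfSpinChar_A3 {w : Fin 10 → Fin 4 → ℚ} (hw : WtSys .D 10 3 (2 • e 3 2) w)
    (p : ℤˣ) : resChar w (halfSpinChar 10 p) =
      (∏ i, spinFactor (signWt (balancedSign i))) *
        ∏ i : Fin 4, ∏ j > i, spinFactor (rootA i j) := by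
  have hzero : ∃ i, w i = 0 := by
    rw [← zero_mem_pmWeights, pmWeights_eq hw wtSys_weightA3, zero_mem_pmWeights]
    exact ⟨Fin.last 9, rfl⟩
  refine mul_left_cancel₀ two_ne_zero_charRing ?_
  rw [two_mul_resChar_halfSpinChar p hzero, prod_spinFactor_eq hw wtSys_weightA3, prod_weightA3,
    spinFactor_zero, mul_comm]

theorem resChar_halfSpinChar_A3_mul_altA_rhoA {w : Fin 10 → Fin 4 → ℚ}
    (hw : WtSys .D 10 3 (2 • e 3 2) w) (p : ℤˣ) :
    resChar w (halfSpinChar 10 p) * altA 3 (rhoA 3) =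
      altA 3 (slWt 3 ![3, 1, 1] + rhoA 3) + altA 3 (slWt 3 ![1, 1, 3] + rhoA 3) := by
  have hone : (1 : Fin 3 → ℕ) = ![1, 1, 1] := by decide
  have hraise : slWt 3 ![3, 1, 1] + rhoA 3 =
      (fun _ ↦ -(1 / 2)) + (Pi.single 0 2 + (slWt 3 1 + rhoA 3)) := by
    rw [hone, slWt_three, slWt_three, rhoA_three, single_zero_eq_vec]
    ext i
    fin_cases i <;> norm_num
  have hlower : slWt 3 ![1, 1, 3] + rhoA 3 =
      (fun _ ↦ 1 / 2) + (Pi.single 3 (-2) + (slWt 3 1 + rhoA 3)) := by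
    rw [hone, slWt_three, slWt_three, rhoA_three, single_three_eq_vec]
    ext i
    fin_cases i <;> norm_num
  have hχ := isCharA_one_prod_spinFactor 3
  rw [resChar_halfSpinChar_A3 hw, mul_assoc, mul_comm (∏ i : Fin 4, _), hχ,
    prod_spinFactor_balancedSign, add_mul, mul_assoc, mul_assoc,
    powerSum_mul_altA_of_step slWt_one_add_rhoA_castSucc,
    powerSum_neg_mul_altA_of_step slWt_one_add_rhoA_castSucc, hraise, hlower, altA_const_add,
    altA_const_add, show Fin.last 3 = 3 from rfl]

end A3

end MFPaper

/-- **Equation (11.3) (half-spin modules for `A₃ < D₁₀`).**  Let `X = A₃` be embedded in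
`Y = D₁₀ = SO₂₀` via the 20-dimensional irreducible representation `δ = 2ω₂ = (0,2,0)`,
and let `lam` be one of the half-spin weights `λ₉, λ₁₀` of `Y`.  Then
`V_Y(lam)↓X = V_X(3ω₁+ω₂+ω₃) ⊕ V_X(ω₁+ω₂+3ω₃)`, i.e. the restriction of the character
is the sum of the two irreducible characters of highest weights `(3,1,1)` and `(1,1,3)`;
in particular `V_Y(lam)↓X` is multiplicity-free. -/
theorem thm_spin_A3_D10 (lam : Fin 10 → ℕ)
    (hlam : lam = e 10 9 ∨ lam = e 10 10) :
    (∀ w, WtSys CType.D 10 3 (2 • e 3 2) w →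
      ∀ f, IsCharY CType.D 10 lam f →
        resChar w f * altA 3 (rhoA 3)
          = altA 3 (slWt 3 ![3, 1, 1] + rhoA 3) + altA 3 (slWt 3 ![1, 1, 3] + rhoA 3)) ∧
    IsMFRes CType.D 10 3 (2 • e 3 2) lam := by
  obtain ⟨p, hp⟩ : ∃ p, IsCharY .D 10 lam (halfSpinChar 10 p) := by
    rcases hlam with rfl | rfl
    · exact ⟨-1, isCharY_halfSpinChar_neg_one 8⟩
    · exact ⟨1, isCharY_halfSpinChar_one 8⟩
  have hres : ∀ w, WtSys CType.D 10 3 (2 • e 3 2) w → ∀ f, IsCharY CType.D 10 lam f →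
      resChar w f * altA 3 (rhoA 3) =
        altA 3 (slWt 3 ![3, 1, 1] + rhoA 3) + altA 3 (slWt 3 ![1, 1, 3] + rhoA 3) := by
    intro w hw f hf
    rw [IsCharY.unique_D hf hp]
    exact resChar_halfSpinChar_A3_mul_altA_rhoA hw p
  exact ⟨hres, fun w hw f hf ↦ exists_decomp_of_eq_add (by decide) (hres w hw f hf)⟩
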